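/- arXiv:1610.02670 — 7 statements merged into one kernel-verified Lean document; each statement's English description precedes it below -/
import Mathlib

section
/- Let n be a positive integer, u ∈ ℂ^n with ‖u‖ = 1, P_x > 0, and let K = P_x u u† (a rank-one covariance). Let h ∈ ℂ^n, a ∈ ℝ^n with a_t ≥ 0, σ_w² > 0, γ = 1/σ_w², and B = diag(h_t √a_t). Then the MMSE satisfies tr[K − K B†(B K B† + σ_w² I_n)⁻¹ B K] = P_x / (1 + γ P_x Σ_{t=1}^n |h_t|² |u_t|² a_t) = P_x / (1 + γ Σ_{t=1}^n |h_t|² σ²_{x_t} a_t), where σ²_{x_t} = P_x |u_t|² is the variance of the t-th signal component. -/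
open Matrix

/-- The Sherman–Morrison formula for a rank-one perturbation of a scalar matrix. -/
theorem Matrix.inv_smul_vecMulVec_add_smul_one {m F : Type*} [Fintype m] [DecidableEq m] [Field F]
    (v w : m → F) (c s : F) (hs : s ≠ 0) (hd : s + c * (w ⬝ᵥ v) ≠ 0) :
    (c • vecMulVec v w + s • (1 : Matrix m m F))⁻¹
      = s⁻¹ • (1 - (c / (s + c * (w ⬝ᵥ v))) • vecMulVec v w) := by
  apply Matrix.inv_eq_right_inv
  have hvv : vecMulVec v w * vecMulVec v w = (w ⬝ᵥ v) • vecMulVec v w := by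
    rw [vecMulVec_mul_vecMulVec, vecMulVec_smul]
  simp only [mul_smul_comm, mul_sub, add_mul, smul_mul_assoc, mul_one, one_mul, hvv]
  ext i j
  simp only [Matrix.smul_apply, Matrix.sub_apply, Matrix.add_apply, smul_eq_mul]
  field_simp
  ring

/-- The error covariance of the linear MMSE estimator for a rank-one source, with the
observation matrices on both sides left arbitrary. -/
theorem Matrix.smul_vecMulVec_sub_mul_inv_mul {m F : Type*} [Fintype m] [DecidableEq m] [Field F]
    (u w : m → F) (B C : Matrix m m F) (c s : F) (hs : s ≠ 0)
    (hd : s + c * ((w ᵥ* C) ⬝ᵥ (B *ᵥ u)) ≠ 0) :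
    c • vecMulVec u w - (c • vecMulVec u w) * C
        * (B * (c • vecMulVec u w) * C + s • (1 : Matrix m m F))⁻¹ * (B * (c • vecMulVec u w))
      = (c * s / (s + c * ((w ᵥ* C) ⬝ᵥ (B *ᵥ u)))) • vecMulVec u w := by
  have hBK : B * (c • vecMulVec u w) = c • vecMulVec (B *ᵥ u) w := by
    rw [mul_smul_comm, mul_vecMulVec]
  have hKC (x : m → F) : c • vecMulVec x w * C = c • vecMulVec x (w ᵥ* C) := by
    rw [smul_mul_assoc, vecMulVec_mul]
  rw [hBK, hKC, hKC, inv_smul_vecMulVec_add_smul_one _ _ _ _ hs hd]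
  simp only [mul_smul_comm, smul_mul_assoc, mul_sub, sub_mul, mul_one, vecMulVec_mul_vecMulVec,
    vecMulVec_smul]
  ext i j
  simp only [Matrix.smul_apply, Matrix.sub_apply, smul_eq_mul]
  field_simp
  ring

/-- for a rank-one (fully correlated) source `K = P_x u u†` with
`‖u‖ = 1`, amplify-and-forward sensing `B = diag(h_t √a_t)` and noise variance
`σw²` (`γ = 1/σw²`), the MMSE equals
`P_x / (1 + γ P_x Σ_t |h_t|² |u_t|² a_t) = P_x / (1 + γ Σ_t |h_t|² σ²_{x_t} a_t)`
with `σ²_{x_t} = P_x |u_t|²`. -/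
theorem stmt4 (n : ℕ) (hn : 0 < n)
    (u : Fin n → ℂ) (hu : ∑ t, ‖u t‖ ^ 2 = 1)
    (Px : ℝ) (hPx : 0 < Px)
    (h : Fin n → ℂ) (a : Fin n → ℝ) (ha : ∀ t, 0 ≤ a t)
    (σw2 : ℝ) (hσ : 0 < σw2) (γ : ℝ) (hγ : γ = 1 / σw2)
    (K : Matrix (Fin n) (Fin n) ℂ)
    (hK : K = (Px : ℂ) • Matrix.vecMulVec u (fun t => (starRingEnd ℂ) (u t)))
    (B : Matrix (Fin n) (Fin n) ℂ)
    (hB : B = Matrix.diagonal (fun t => h t * (Real.sqrt (a t) : ℂ)))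
    (σx2 : Fin n → ℝ) (hσx2 : ∀ t, σx2 t = Px * ‖u t‖ ^ 2) :
    Matrix.trace
        (K - K * Bᴴ * (B * K * Bᴴ + (σw2 : ℂ) • (1 : Matrix (Fin n) (Fin n) ℂ))⁻¹ * (B * K))
      = ((Px / (1 + γ * Px * ∑ t, ‖h t‖ ^ 2 * ‖u t‖ ^ 2 * a t) : ℝ) : ℂ)
    ∧ Matrix.trace
        (K - K * Bᴴ * (B * K * Bᴴ + (σw2 : ℂ) • (1 : Matrix (Fin n) (Fin n) ℂ))⁻¹ * (B * K))
      = ((Px / (1 + γ * ∑ t, ‖h t‖ ^ 2 * σx2 t * a t) : ℝ) : ℂ) := by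
  have hsum : γ * Px * ∑ t, ‖h t‖ ^ 2 * ‖u t‖ ^ 2 * a t
      = γ * ∑ t, ‖h t‖ ^ 2 * σx2 t * a t := by
    rw [mul_assoc, Finset.mul_sum]
    refine congrArg (γ * ·) (Finset.sum_congr rfl fun t _ => ?_)
    rw [hσx2]
    ring
  rw [← hsum, and_self]
  set S : ℝ := ∑ t, ‖h t‖ ^ 2 * ‖u t‖ ^ 2 * a t with hS
  have hS0 : 0 ≤ S := Finset.sum_nonneg fun t _ => mul_nonneg (by positivity) (ha t)
  have hpos : 0 < σw2 + Px * S := by positivity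
  have hdot : ((fun t => (starRingEnd ℂ) (u t)) ᵥ* Bᴴ) ⬝ᵥ (B *ᵥ u) = (S : ℂ) := by
    simp only [hB, hS, diagonal_conjTranspose, dotProduct, vecMul_diagonal, mulVec_diagonal,
      Complex.ofReal_sum]
    refine Finset.sum_congr rfl fun t _ => ?_
    have hsq : (Real.sqrt (a t) : ℂ) * (Real.sqrt (a t) : ℂ) = (a t : ℂ) := by
      rw [← Complex.ofReal_mul, Real.mul_self_sqrt (ha t)]
    simp only [Pi.star_apply, RCLike.star_def, map_mul, Complex.conj_ofReal, Complex.ofReal_mul,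
      Complex.ofReal_pow, ← Complex.conj_mul', ← hsq]
    ring
  have htr : trace (vecMulVec u fun t => (starRingEnd ℂ) (u t)) = 1 := by
    simp only [trace_vecMulVec, dotProduct, Complex.mul_conj']
    exact_mod_cast hu
  have hd : (σw2 : ℂ) + Px * S ≠ 0 := by exact_mod_cast hpos.ne'
  rw [hK, smul_vecMulVec_sub_mul_inv_mul _ _ _ _ _ _ (by exact_mod_cast hσ.ne')
    (by rwa [hdot]), hdot, trace_smul, htr, smul_eq_mul, mul_one]
  have hreal : Px * σw2 / (σw2 + Px * S) = Px / (1 + γ * Px * S) := by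
    have : 1 + γ * Px * S = (σw2 + Px * S) / σw2 := by
      rw [hγ]
      field_simp
    rw [this, div_div_eq_mul_div]
  rw [← hreal]
  push_cast
  rfl
end

section
/- Let n be a positive integer, let c_1,…,c_n ≥ 0 (the channel power gains c_t = |h_t|²) and E_1,…,E_n ≥ 0 be given. Then: (i) for every q ∈ ℝ^n with q_t ≥ 0, Σ_{l=1}^t q_l ≤ Σ_{l=1}^t E_l for all t = 1,…,n−1, and Σ_{l=1}^n q_l = Σ_{l=1}^n E_l, one has Σ_{t=1}^n c_t q_t ≤ Σ_{l=1}^n E_l · max_{t ≥ l} c_t; and (ii) there exists such a feasible q attaining equality. Consequently, the recursive procedure that repeatedly transmits all accumulated energy at the remaining time slot with the highest channel gain maximizes Σ_t c_t q_t subject to the energy causality constraints. -/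
/-- Abel summation bound: if all initial partial sums of `d` over `s` are nonnegative and `M` is
antitone and bounded below by `m` on `s`, then `m * ∑ d ≤ ∑ M * d`. -/
lemma Finset.mul_sum_le_sum_mul_of_antitone {α : Type*} [LinearOrder α] {M : α → ℝ}
    (hM : Antitone M) (d : α → ℝ) (s : Finset α)
    (hd : ∀ t ∈ s, 0 ≤ ∑ l ∈ s with l ≤ t, d l) {m : ℝ} (hm : ∀ t ∈ s, m ≤ M t) :
    m * ∑ t ∈ s, d t ≤ ∑ t ∈ s, M t * d t := by
  induction s using Finset.induction_on_max generalizing m with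
  | empty => simp
  | insert a s ha ih =>
    have has : a ∉ s := fun h => lt_irrefl a (ha a h)
    have hs : M a * ∑ t ∈ s, d t ≤ ∑ t ∈ s, M t * d t := by
      refine ih (fun t ht => ?_) fun t ht => hM (ha t ht).le
      have h := hd t (Finset.mem_insert_of_mem ht)
      rwa [Finset.filter_insert, if_neg (not_le.mpr (ha t ht))] at h
    have htotal : 0 ≤ ∑ t ∈ insert a s, d t := by
      have h := hd a (Finset.mem_insert_self a s)
      rwa [Finset.filter_true_of_mem] at h
      intro t ht
      rcases Finset.mem_insert.mp ht with rfl | ht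
      exacts [le_rfl, (ha t ht).le]
    have hle := mul_le_mul_of_nonneg_right (hm a (Finset.mem_insert_self a s)) htotal
    rw [Finset.sum_insert has] at hle ⊢
    rw [Finset.sum_insert has]
    linarith

/-- paper's Lemma 3: with channel power gains `c_t ≥ 0` and energy
arrivals `E_l ≥ 0`, (i) every energy-causal allocation `q` satisfies
`Σ_t c_t q_t ≤ Σ_l E_l · max_{t ≥ l} c_t`, and (ii) some energy-causal
allocation attains this bound; hence transmitting all accumulated energy at the
remaining slot with the highest gain is optimal. -/
theorem stmt6 (n : ℕ) (hn : 0 < n)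
    (c E : Fin n → ℝ) (hc : ∀ t, 0 ≤ c t) (hE : ∀ t, 0 ≤ E t) :
    (∀ q : Fin n → ℝ, (∀ t, 0 ≤ q t) →
      (∀ t : Fin n, ∑ l ∈ Finset.Iic t, q l ≤ ∑ l ∈ Finset.Iic t, E l) →
      (∑ l, q l = ∑ l, E l) →
      ∑ t, c t * q t
        ≤ ∑ l, E l * (Finset.Ici l).sup' ⟨l, Finset.mem_Ici.mpr le_rfl⟩ c)
    ∧ (∃ q : Fin n → ℝ, (∀ t, 0 ≤ q t) ∧
      (∀ t : Fin n, ∑ l ∈ Finset.Iic t, q l ≤ ∑ l ∈ Finset.Iic t, E l) ∧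
      (∑ l, q l = ∑ l, E l) ∧
      ∑ t, c t * q t
        = ∑ l, E l * (Finset.Ici l).sup' ⟨l, Finset.mem_Ici.mpr le_rfl⟩ c) := by
  constructor
  · intro q hq hcausal _
    set M : Fin n → ℝ := fun l => (Finset.Ici l).sup' ⟨l, Finset.mem_Ici.mpr le_rfl⟩ c
    have hcM : ∀ t, c t ≤ M t := fun t => Finset.le_sup' c (Finset.mem_Ici.mpr le_rfl)
    have hanti : Antitone M := fun _ _ hst => Finset.sup'_mono c (Finset.Ici_subset_Ici.mpr hst) _
    have habel := Finset.mul_sum_le_sum_mul_of_antitone hanti (fun t => E t - q t) Finset.univ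
      (fun t _ => by
        rw [Finset.filter_ge_eq_Iic, Finset.sum_sub_distrib]
        exact sub_nonneg.mpr (hcausal t))
      (m := 0) fun t _ => (hc t).trans (hcM t)
    simp only [zero_mul, mul_sub, Finset.sum_sub_distrib, sub_zero, sub_nonneg] at habel
    calc ∑ t, c t * q t ≤ ∑ t, M t * q t :=
          Finset.sum_le_sum fun t _ => mul_le_mul_of_nonneg_right (hcM t) (hq t)
      _ ≤ ∑ t, M t * E t := habel
      _ = ∑ t, E t * M t := Finset.sum_congr rfl fun t _ => mul_comm _ _
  · have hbest : ∀ l : Fin n, ∃ t, l ≤ t ∧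
        (Finset.Ici l).sup' ⟨l, Finset.mem_Ici.mpr le_rfl⟩ c = c t := fun l => by
      obtain ⟨t, ht, h⟩ := Finset.exists_mem_eq_sup' ⟨l, Finset.mem_Ici.mpr le_rfl⟩ c
      exact ⟨t, Finset.mem_Ici.mp ht, h⟩
    choose best hle hbest using hbest
    refine ⟨fun t => ∑ l, if best l = t then E l else 0, fun t => ?_, fun t => ?_, ?_, ?_⟩
    · exact Finset.sum_nonneg fun l _ => by split_ifs; exacts [hE l, le_rfl]
    · rw [Finset.sum_comm, ← Finset.filter_ge_eq_Iic, Finset.sum_filter _ E]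
      refine Finset.sum_le_sum fun l _ => ?_
      rw [Finset.sum_ite_eq]
      by_cases hlt : best l ≤ t
      · simp [hlt, (hle l).trans hlt]
      · simp only [Finset.mem_filter_univ, hlt, if_false]
        split_ifs
        exacts [hE l, le_rfl]
    · rw [Finset.sum_comm]
      simp
    · simp only [Finset.mul_sum]
      rw [Finset.sum_comm]
      simp [hbest, mul_comm]
end

section
/- Let n, s be positive integers with s ≤ n, U ∈ ℂ^{n×s} with U†U = I_s, P_x > 0, γ > 0, and set K = (P_x/s) U U† and σ²_{x_t} = [K]_{tt}. For every a ∈ ℝ^n with a_t ≥ 0 and Σ_{t=1}^n a_t σ²_{x_t} = E_tot, it holds that tr[((s/P_x) I_s + γ U† diag(a_1,…,a_n) U)⁻¹] ≥ P_x / (1 + γ E_tot/s). Moreover, the uniform allocation a_t = E_tot/P_x for all t satisfies the total-energy constraint and achieves equality. -/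
open Matrix
open scoped ComplexOrder

/-- The trace form of the arithmetic–harmonic mean inequality: a positive definite matrix of size
`m` and trace `τ` satisfies `m² / τ ≤ tr M⁻¹`. -/
theorem Matrix.PosDef.sq_card_div_trace_le_trace_inv {ι : Type*} [Fintype ι] [DecidableEq ι]
    {M : Matrix ι ι ℂ} (hM : M.PosDef) {τ : ℝ} (hτ : 0 < τ) (hτM : M.trace = (τ : ℂ)) :
    (((Fintype.card ι : ℝ) ^ 2 / τ : ℝ) : ℂ) ≤ M⁻¹.trace := by
  set c : ℂ := (((Fintype.card ι : ℝ) / τ : ℝ) : ℂ) with hc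
  have hc' : star c = c := by rw [hc]; exact Complex.conj_ofReal _
  have hdet : IsUnit M.det := (Matrix.isUnit_iff_isUnit_det M).mp hM.isUnit
  have key := (hM.inv.posSemidef.conjTranspose_mul_mul_same (1 - c • M)).trace_nonneg
  have expand : (1 - c • M)ᴴ * M⁻¹ * (1 - c • M) = M⁻¹ - (2 * c) • 1 + (c ^ 2) • M := by
    rw [conjTranspose_sub, conjTranspose_one, conjTranspose_smul, hM.isHermitian.eq, hc']
    simp only [sub_mul, mul_sub, one_mul, mul_one, smul_mul_assoc, mul_smul_comm,
      Matrix.mul_nonsing_inv _ hdet, Matrix.nonsing_inv_mul _ hdet]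
    module
  rw [expand, trace_add, trace_sub, trace_smul, trace_smul, trace_one, hτM] at key
  rw [← sub_nonneg]
  convert key using 1
  have : (τ : ℂ) ≠ 0 := by exact_mod_cast hτ.ne'
  rw [hc]
  push_cast
  simp only [smul_eq_mul]
  field_simp
  ring

theorem Matrix.trace_conjTranspose_mul_diagonal_mul {m n : Type*} [Fintype m] [Fintype n]
    [DecidableEq m] (U : Matrix m n ℂ) (a : m → ℝ) :
    (Uᴴ * diagonal (fun t => (a t : ℂ)) * U).trace
      = ((∑ t, a t * ∑ k, ‖U t k‖ ^ 2 : ℝ) : ℂ) := by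
  rw [Matrix.mul_assoc, trace_mul_comm, Matrix.mul_assoc]
  simp only [trace, diag_apply, diagonal_mul]
  push_cast
  simp [mul_apply, Complex.mul_conj']

/-- paper's Lemma 4: for the flat-spectrum low-rank source
`K = (P_x/s) U U†` (with `U†U = I_s`, component variances
`σ²_{x_t} = [K]_{tt} = (P_x/s) Σ_k |U_{tk}|²`) over a static channel, every
allocation `a ≥ 0` with `Σ_t a_t σ²_{x_t} = E_tot` has MMSE
`tr[((s/P_x)I_s + γ U† diag(a) U)⁻¹] ≥ P_x / (1 + γ E_tot/s)`; moreover the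
uniform allocation `a_t = E_tot/P_x` is feasible and attains the bound. -/
theorem stmt7 (n s : ℕ) (hn : 0 < n) (hs : 0 < s) (hsn : s ≤ n)
    (U : Matrix (Fin n) (Fin s) ℂ) (hU : Uᴴ * U = 1)
    (Px γ Etot : ℝ) (hPx : 0 < Px) (hγ : 0 < γ) (hEtot : 0 ≤ Etot)
    (σx2 : Fin n → ℝ) (hσx2 : ∀ t, σx2 t = (Px / s) * ∑ k, ‖U t k‖ ^ 2) :
    (∀ a : Fin n → ℝ, (∀ t, 0 ≤ a t) → (∑ t, a t * σx2 t = Etot) →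
      ((Px / (1 + γ * Etot / s) : ℝ) : ℂ)
        ≤ Matrix.trace
            ((((s : ℝ) / Px : ℝ) • (1 : Matrix (Fin s) (Fin s) ℂ)
                + (γ : ℂ) • (Uᴴ * Matrix.diagonal (fun t => (a t : ℂ)) * U))⁻¹))
    ∧ (∑ t : Fin n, (Etot / Px) * σx2 t = Etot)
    ∧ Matrix.trace
          ((((s : ℝ) / Px : ℝ) • (1 : Matrix (Fin s) (Fin s) ℂ)
              + (γ : ℂ) • (Uᴴ * Matrix.diagonal (fun _ : Fin n => ((Etot / Px : ℝ) : ℂ)) * U))⁻¹)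
        = ((Px / (1 + γ * Etot / s) : ℝ) : ℂ) := by
  have hs' : (0 : ℝ) < s := by exact_mod_cast hs
  have hden : 0 < s + γ * Etot := by positivity
  refine ⟨fun a ha hsum => ?_, ?_, ?_⟩
  · have hweighted : ∑ t, a t * ∑ k, ‖U t k‖ ^ 2 = s / Px * Etot := by
      rw [← hsum, Finset.mul_sum]
      refine Finset.sum_congr rfl fun t _ => ?_
      rw [hσx2]
      field_simp
    have hdiag : (diagonal (fun t => (a t : ℂ))).PosSemidef :=
      PosSemidef.diagonal fun t => by simpa using ha t
    have hpos : (((s : ℝ) / Px : ℝ) • (1 : Matrix (Fin s) (Fin s) ℂ)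
        + (γ : ℂ) • (Uᴴ * Matrix.diagonal (fun t => (a t : ℂ)) * U)).PosDef :=
      (PosDef.one.smul (div_pos hs' hPx)).add_posSemidef
        ((hdiag.conjTranspose_mul_mul_same U).smul (by exact_mod_cast hγ.le))
    have hτ : 0 < (s : ℝ) / Px * (s + γ * Etot) := by positivity
    convert hpos.sq_card_div_trace_le_trace_inv hτ ?_ using 2
    · rw [Fintype.card_fin]
      field_simp
    · rw [trace_add, trace_smul, trace_smul, trace_conjTranspose_mul_diagonal_mul, hweighted,
        trace_one, Fintype.card_fin, Complex.real_smul, smul_eq_mul]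
      push_cast
      ring
  · have htrace : ∑ t, ∑ k, ‖U t k‖ ^ 2 = (s : ℝ) := by
      have h := trace_conjTranspose_mul_diagonal_mul U fun _ => 1
      simp only [Complex.ofReal_one, diagonal_one, Matrix.mul_one, hU, trace_one,
        Fintype.card_fin, one_mul] at h
      exact_mod_cast h.symm
    simp only [hσx2, ← Finset.mul_sum, htrace]
    field_simp
  · have hscalar : ((s : ℝ) / Px : ℝ) • (1 : Matrix (Fin s) (Fin s) ℂ)
        + (γ : ℂ) • (Uᴴ * Matrix.diagonal (fun _ : Fin n => ((Etot / Px : ℝ) : ℂ)) * U)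
        = (((s + γ * Etot) / Px : ℝ) : ℂ) • (1 : Matrix (Fin s) (Fin s) ℂ) := by
      rw [← smul_one_eq_diagonal, Matrix.mul_smul, Matrix.mul_one, Matrix.smul_mul, hU, smul_smul,
        ← Complex.coe_smul, ← add_smul]
      congr 1
      push_cast
      ring
    have hinv : ((((s + γ * Etot) / Px : ℝ) : ℂ) • (1 : Matrix (Fin s) (Fin s) ℂ))⁻¹
        = ((Px / (s + γ * Etot) : ℝ) : ℂ) • (1 : Matrix (Fin s) (Fin s) ℂ) := by
      refine inv_eq_right_inv ?_
      rw [smul_mul_smul_comm, one_mul, ← Complex.ofReal_mul,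
        div_mul_div_cancel₀ hPx.ne', div_self hden.ne', Complex.ofReal_one, one_smul]
    rw [hscalar, hinv, trace_smul, trace_one, Fintype.card_fin, smul_eq_mul]
    norm_cast
    field_simp
end

section
/- Let n be a positive integer, P_x > 0, ρ ∈ ℝ with ρ < 1 and ρ(n−1) + 1 > 0, and let K(ρ) = (P_x/n)((1−ρ) I_n + ρ J_n), where J_n is the all-ones matrix. Let γ > 0 and define err(a) = tr[(K(ρ)⁻¹ + γ diag(a_1,…,a_n))⁻¹] for a ∈ ℝ^n with nonnegative entries. Then err is Schur-convex: if a ≺ b with a, b entrywise nonnegative, then err(a) ≤ err(b). Consequently, regardless of the value of ρ (i.e. of the level of statistical dependence between signal components), any energy-feasible allocation majorized by every energy-feasible allocation minimizes err. -/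
open Matrix

/-- `a` is majorized by `b` (written `a ≺ b`): for every `k`, the sum of the `k`
largest entries of `a` is at most the sum of the `k` largest entries of `b`,
and the total sums agree. -/
def Majorizes {n : ℕ} (a b : Fin n → ℝ) : Prop :=
  (∀ k : ℕ, k < n → ∀ s : Finset (Fin n), s.card = k →
      ∃ t : Finset (Fin n), t.card = k ∧ ∑ i ∈ s, a i ≤ ∑ i ∈ t, b i) ∧
  (∑ i, a i = ∑ i, b i)

/-- Abel summation bound: a monotone weight applied to terms with nonpositive partial sums. -/
theorem Fin.last_mul_sum_le_sum_mul {m : ℕ} {c d : Fin (m + 1) → ℝ} (hc : Monotone c)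
    (hd : ∀ k (hk : k ≤ m + 1), ∑ i : Fin k, d (Fin.castLE hk i) ≤ 0) :
    c (Fin.last m) * ∑ i, d i ≤ ∑ i, c i * d i := by
  induction m with
  | zero => simp
  | succ m ih =>
    have hD : ∑ i : Fin (m + 1), d i.castSucc ≤ 0 := hd (m + 1) (by lia)
    have hlast : c (Fin.last m).castSucc ≤ c (Fin.last (m + 1)) := hc (Fin.le_last _)
    have hinit := ih (c := fun i => c i.castSucc) (d := fun i => d i.castSucc)
      (fun i j hij => hc (Fin.castSucc_le_castSucc_iff.2 hij))
      (fun k hk => hd k (hk.trans (by lia)))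
    rw [Fin.sum_univ_castSucc (f := d), Fin.sum_univ_castSucc (f := fun i => c i * d i)]
    nlinarith [mul_le_mul_of_nonpos_right hlast hD]

theorem StrictMono.val_le_val_fin {k n : ℕ} {f : Fin k → Fin n} (hf : StrictMono f)
    (i : Fin k) : (i : ℕ) ≤ f i := by
  obtain ⟨i, hi⟩ := i
  induction i with
  | zero => exact Nat.zero_le _
  | succ i ih =>
    have hlt : f ⟨i, by lia⟩ < f ⟨i + 1, hi⟩ := hf (by simp)
    exact (Nat.succ_le_succ (ih (by lia))).trans hlt

/-- The first `k` entries of an antitone tuple have the largest sum among all `k`-subsets. -/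
theorem Antitone.sum_le_sum_castLE {n k : ℕ} {b : Fin n → ℝ} (hb : Antitone b) (hk : k ≤ n)
    {t : Finset (Fin n)} (ht : t.card = k) :
    ∑ i ∈ t, b i ≤ ∑ i : Fin k, b (Fin.castLE hk i) := by
  rw [← Finset.map_orderEmbOfFin_univ t ht, Finset.sum_map]
  exact Finset.sum_le_sum fun i _ =>
    hb (Fin.le_def.2 ((t.orderEmbOfFin ht).strictMono.val_le_val_fin i))

theorem Majorizes.sum_castLE_le {n : ℕ} {a b : Fin n → ℝ} (h : Majorizes a b)
    (τ π : Equiv.Perm (Fin n)) (hπ : Antitone (b ∘ π)) {k : ℕ} (hk : k ≤ n) :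
    ∑ i : Fin k, a (τ (Fin.castLE hk i)) ≤ ∑ i : Fin k, b (π (Fin.castLE hk i)) := by
  rcases hk.lt_or_eq with hlt | rfl
  · let e : Fin k ↪ Fin n := (Fin.castLEEmb hk).trans τ.toEmbedding
    obtain ⟨t, ht, hle⟩ := h.1 k hlt (Finset.univ.map e) (by simp)
    calc ∑ i : Fin k, a (τ (Fin.castLE hk i)) = ∑ i ∈ Finset.univ.map e, a i := by simp [e]
      _ ≤ ∑ i ∈ t, b i := hle
      _ = ∑ i ∈ t.map π.symm.toEmbedding, (b ∘ π) i := by simp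
      _ ≤ _ := hπ.sum_le_sum_castLE hk (by simpa using ht)
  · simpa using ((Equiv.sum_comp τ a).trans (h.2.trans (Equiv.sum_comp π b).symm)).le

/-- Against any weight, some rearrangement of the majorizing tuple has a smaller weighted sum. -/
theorem Majorizes.exists_perm_sum_mul_le {n : ℕ} {a b : Fin n → ℝ} (h : Majorizes a b)
    (c : Fin n → ℝ) :
    ∃ σ : Equiv.Perm (Fin n), ∑ i, c i * b (σ i) ≤ ∑ i, c i * a i := by
  set τ := Tuple.sort c
  set π := Tuple.sort (-b)
  have hπ : Antitone (b ∘ π) := fun i j hij => by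
    simpa using Tuple.monotone_sort (-b) hij
  refine ⟨τ.symm.trans π, ?_⟩
  rcases n with _ | m
  · simp
  have habel := Fin.last_mul_sum_le_sum_mul (d := fun i => a (τ i) - b (π i))
    (Tuple.monotone_sort c) fun k hk => by
      simpa [Finset.sum_sub_distrib] using h.sum_castLE_le τ π hπ hk
  have htotal : ∑ i, (a (τ i) - b (π i)) = 0 := by
    rw [Finset.sum_sub_distrib, Equiv.sum_comp τ a, Equiv.sum_comp π b, h.2, sub_self]
  rw [htotal, mul_zero] at habel
  rw [← Equiv.sum_comp τ, ← Equiv.sum_comp τ fun i => c i * a i]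
  simpa [mul_sub, Finset.sum_sub_distrib] using habel

/-- First-order convexity bound for the trace of the inverse of a positive definite matrix. -/
theorem Matrix.PosDef.trace_inv_sub_le {ι : Type*} [Fintype ι] [DecidableEq ι]
    {A B : Matrix ι ι ℝ} (hA : A.PosDef) (hB : B.PosDef) :
    A⁻¹.trace - (A⁻¹ * (B - A) * A⁻¹).trace ≤ B⁻¹.trace := by
  have hAu := (Matrix.isUnit_iff_isUnit_det A).1 hA.isUnit
  have hBu := (Matrix.isUnit_iff_isUnit_det B).1 hB.isUnit
  have hherm : (B⁻¹ - A⁻¹)ᴴ = B⁻¹ - A⁻¹ := hB.inv.isHermitian.sub hA.inv.isHermitian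
  have hnonneg := (hB.posSemidef.mul_mul_conjTranspose_same (B⁻¹ - A⁻¹)).trace_nonneg
  have hexpand : (B⁻¹ - A⁻¹) * B * (B⁻¹ - A⁻¹)
      = B⁻¹ - (A⁻¹ - A⁻¹ * (B - A) * A⁻¹) := by
    simp only [sub_mul, mul_sub, Matrix.nonsing_inv_mul _ hBu, Matrix.nonsing_inv_mul _ hAu,
      Matrix.mul_nonsing_inv_cancel_right _ _ hBu, one_mul]
    abel
  rw [hherm, hexpand, Matrix.trace_sub, Matrix.trace_sub] at hnonneg
  linarith

theorem Matrix.trace_mul_diagonal_mul {ι : Type*} [Fintype ι] [DecidableEq ι]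
    (A : Matrix ι ι ℝ) (d : ι → ℝ) :
    (A * Matrix.diagonal d * A).trace = ∑ i, (A * A) i i * d i := by
  rw [Matrix.trace_mul_comm, ← Matrix.mul_assoc]
  simp [Matrix.trace, Matrix.mul_diagonal]

theorem Matrix.trace_submatrix_equiv {ι κ : Type*} [Fintype ι] [Fintype κ]
    (A : Matrix ι ι ℝ) (e : κ ≃ ι) : (A.submatrix e e).trace = A.trace :=
  Equiv.sum_comp e fun i => A i i

/-- The trace of `(M + γ diag a)⁻¹` is Schur-convex in `a` when `M` is positive definite and
invariant under simultaneous permutations of rows and columns. -/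
theorem Majorizes.trace_inv_add_smul_diagonal_le {n : ℕ} {M : Matrix (Fin n) (Fin n) ℝ}
    (hM : M.PosDef) (hperm : ∀ σ : Equiv.Perm (Fin n), M.submatrix σ σ = M) {γ : ℝ}
    (hγ : 0 ≤ γ) {a b : Fin n → ℝ} (ha : ∀ t, 0 ≤ a t) (hb : ∀ t, 0 ≤ b t)
    (h : Majorizes a b) :
    ((M + γ • Matrix.diagonal a)⁻¹).trace ≤ ((M + γ • Matrix.diagonal b)⁻¹).trace := by
  have hpos : ∀ d : Fin n → ℝ, (∀ t, 0 ≤ d t) → (M + γ • Matrix.diagonal d).PosDef :=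
    fun d hd => hM.add_posSemidef ((Matrix.PosSemidef.diagonal hd).smul hγ)
  set A := M + γ • Matrix.diagonal a with hA
  obtain ⟨σ, hσ⟩ := h.exists_perm_sum_mul_le fun i => (A⁻¹ * A⁻¹) i i
  have hsymm : (M + γ • Matrix.diagonal b).submatrix σ σ
      = M + γ • Matrix.diagonal (b ∘ σ) := by
    rw [Matrix.submatrix_add, Pi.add_apply, Pi.add_apply, hperm, Matrix.submatrix_smul,
      Pi.smul_apply, Pi.smul_apply, Matrix.submatrix_diagonal_equiv]
  have htrace : ((M + γ • Matrix.diagonal (b ∘ σ))⁻¹).trace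
      = ((M + γ • Matrix.diagonal b)⁻¹).trace := by
    rw [← hsymm, Matrix.inv_submatrix_equiv, Matrix.trace_submatrix_equiv]
  have hconv := (hpos a ha).trace_inv_sub_le (hpos (b ∘ σ) fun t => hb (σ t))
  rw [← hA] at hconv
  have hdiff : M + γ • Matrix.diagonal (b ∘ σ) - A
      = γ • Matrix.diagonal (fun i => b (σ i) - a i) := by
    rw [hA, add_sub_add_left_eq_sub, ← smul_sub, Matrix.diagonal_sub]
    rfl
  rw [hdiff, Matrix.mul_smul, Matrix.smul_mul, Matrix.trace_smul,
    Matrix.trace_mul_diagonal_mul, htrace] at hconv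
  have hle : ∑ i, (A⁻¹ * A⁻¹) i i * (b (σ i) - a i) ≤ 0 := by
    simpa [mul_sub, Finset.sum_sub_distrib] using hσ
  have := mul_nonpos_of_nonneg_of_nonpos hγ hle
  rw [smul_eq_mul] at hconv
  linarith

/-- The equicorrelation matrix `(1 - ρ) I + ρ J` is positive definite. -/
theorem Matrix.posDef_equicorrelation {n : ℕ} {ρ : ℝ} (hρ1 : ρ < 1)
    (hρ2 : 0 < ρ * (n - 1) + 1) :
    ((1 - ρ) • (1 : Matrix (Fin n) (Fin n) ℝ)
      + ρ • Matrix.of (fun _ _ => (1 : ℝ))).PosDef := by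
  refine Matrix.PosDef.of_dotProduct_mulVec_pos ?_ fun {x} hx => ?_
  · ext i j
    simp [Matrix.one_apply, eq_comm]
  have hquad : star x ⬝ᵥ (((1 - ρ) • (1 : Matrix (Fin n) (Fin n) ℝ)
      + ρ • Matrix.of (fun _ _ => (1 : ℝ))) *ᵥ x)
      = (1 - ρ) * ∑ i, x i ^ 2 + ρ * (∑ i, x i) ^ 2 := by
    have hJ : (Matrix.of (fun _ _ => (1 : ℝ)) : Matrix (Fin n) (Fin n) ℝ) *ᵥ x
        = fun _ => ∑ i, x i := by
      ext i
      simp [Matrix.mulVec, dotProduct]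
    rw [Matrix.add_mulVec, Matrix.smul_mulVec, Matrix.smul_mulVec, Matrix.one_mulVec, hJ,
      dotProduct_add, dotProduct_smul, dotProduct_smul]
    simp [dotProduct, ← Finset.sum_mul, pow_two]
  have hsq : 0 < ∑ i, x i ^ 2 := by
    obtain ⟨i, hi⟩ := Function.ne_iff.1 hx
    exact Finset.sum_pos' (fun j _ => sq_nonneg _) ⟨i, Finset.mem_univ i, sq_pos_of_ne_zero hi⟩
  have hcauchy : (∑ i, x i) ^ 2 ≤ n * ∑ i, x i ^ 2 := by
    simpa using sq_sum_le_card_mul_sum_sq (s := Finset.univ) (f := x)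
  rw [hquad]
  rcases le_or_gt 0 ρ with hρ | hρ
  · have := mul_pos (sub_pos.2 hρ1) hsq
    positivity
  · nlinarith [mul_le_mul_of_nonpos_left hcauchy hρ.le, mul_pos hρ2 hsq]

/-- paper's Lemma 6: for the static-correlation covariance
`K(ρ) = (P_x/n)((1−ρ) I_n + ρ J_n)` with `ρ < 1` and `ρ(n−1)+1 > 0`, the MMSE
`err(a) = tr[(K(ρ)⁻¹ + γ diag(a))⁻¹]` is Schur-convex in the power allocation;
consequently, regardless of `ρ`, any feasible allocation majorized by every
feasible allocation minimizes `err` on the feasible set. -/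
theorem stmt12 (n : ℕ) (hn : 0 < n) (Px ρ : ℝ) (hPx : 0 < Px)
    (hρ1 : ρ < 1) (hρ2 : 0 < ρ * (n - 1) + 1)
    (K : Matrix (Fin n) (Fin n) ℝ)
    (hK : K = (Px / n) • ((1 - ρ) • (1 : Matrix (Fin n) (Fin n) ℝ)
        + ρ • Matrix.of (fun _ _ => (1 : ℝ))))
    (γ : ℝ) (hγ : 0 < γ) :
    (∀ a b : Fin n → ℝ, (∀ t, 0 ≤ a t) → (∀ t, 0 ≤ b t) → Majorizes a b →
      Matrix.trace ((K⁻¹ + γ • Matrix.diagonal a)⁻¹)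
        ≤ Matrix.trace ((K⁻¹ + γ • Matrix.diagonal b)⁻¹))
    ∧ (∀ S : Set (Fin n → ℝ), (∀ a ∈ S, ∀ t, 0 ≤ a t) →
        ∀ astar ∈ S, (∀ b ∈ S, Majorizes astar b) →
        ∀ b ∈ S,
          Matrix.trace ((K⁻¹ + γ • Matrix.diagonal astar)⁻¹)
            ≤ Matrix.trace ((K⁻¹ + γ • Matrix.diagonal b)⁻¹)) := by
  have hpos : K⁻¹.PosDef := by
    rw [hK]
    exact ((Matrix.posDef_equicorrelation hρ1 hρ2).smul (by positivity)).inv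
  have hperm : ∀ σ : Equiv.Perm (Fin n), K⁻¹.submatrix σ σ = K⁻¹ := fun σ => by
    rw [← Matrix.inv_submatrix_equiv]
    congr 1
    ext i j
    simp [hK, Matrix.one_apply]
  exact ⟨fun a b ha hb hab => hab.trace_inv_add_smul_diagonal_le hpos hperm hγ.le ha hb,
    fun S hS astar hastar hmin b hb =>
      (hmin b hb).trace_inv_add_smul_diagonal_le hpos hperm hγ.le (hS astar hastar) (hS b hb)⟩
end

section
/- Let n = Δ·s with Δ, s positive integers, 0 ≤ t_d ≤ Δ−1, P_x > 0, γ > 0, σ_x² = P_x/n, and let F_Ω be the first s columns of the n-point DFT matrix, with static channel h_t = 1. Define err(a) = tr[((s/P_x) I_s + γ F_Ω† diag(a_t) F_Ω)⁻¹]. Let a* ∈ ℝ^n be the allocation with a*_{Δr+t_d} = E_tot/(s σ_x²) for r = 0,…,s−1 and a*_t = 0 otherwise. Then err(a*) = P_x/(1 + γ E_tot/s), and for every a ∈ ℝ^n with a_t ≥ 0 and Σ_{t} a_t σ_x² = E_tot one has err(a) ≥ err(a*). In particular, if a* is feasible for the energy causality constraints, it is an optimal strategy for the full energy-harvesting problem.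 -/
open Matrix
open scoped ComplexOrder

/-- The trace of the inverse of a positive definite matrix lies above each of its tangents
at the scalar matrices. -/
lemma Matrix.PosDef.tangent_le_trace_inv {ι : Type*} [Fintype ι] [DecidableEq ι]
    {M : Matrix ι ι ℂ} (hM : M.PosDef) (c : ℝ) :
    2 * (c : ℂ) * Fintype.card ι - (c : ℂ) ^ 2 * M.trace ≤ M⁻¹.trace := by
  have hdet : IsUnit M.det := (Matrix.isUnit_iff_isUnit_det M).1 hM.isUnit
  have hpsd := hM.inv.posSemidef.conjTranspose_mul_mul_same (1 - (c : ℂ) • M)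
  have hherm : (1 - (c : ℂ) • M)ᴴ = 1 - (c : ℂ) • M := by
    simp [hM.isHermitian.eq]
  have hexp : (1 - (c : ℂ) • M) * M⁻¹ * (1 - (c : ℂ) • M)
      = M⁻¹ - (2 * (c : ℂ)) • (1 : Matrix ι ι ℂ) + ((c : ℂ) ^ 2) • M := by
    simp only [sub_mul, mul_sub, one_mul, mul_one, smul_mul_assoc, mul_smul_comm,
      Matrix.mul_nonsing_inv M hdet, Matrix.nonsing_inv_mul M hdet]
    module
  rw [hherm, hexp] at hpsd
  have h := hpsd.trace_nonneg
  simp only [Matrix.trace_add, Matrix.trace_sub, Matrix.trace_smul, Matrix.trace_one,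
    smul_eq_mul] at h
  rw [← sub_nonneg]
  convert h using 1
  ring

/-- Among positive definite matrices of given trace, the trace of the inverse is smallest
at the scalar matrix. -/
lemma Matrix.PosDef.card_sq_div_le_trace_inv {ι : Type*} [Fintype ι] [DecidableEq ι]
    {M : Matrix ι ι ℂ} (hM : M.PosDef) {τ : ℝ} (hτ : τ ≠ 0) (htr : M.trace = τ) :
    (((Fintype.card ι : ℝ) ^ 2 / τ : ℝ) : ℂ) ≤ M⁻¹.trace := by
  have hτ' : (τ : ℂ) ≠ 0 := by exact_mod_cast hτ
  refine le_of_eq_of_le ?_ (hM.tangent_le_trace_inv (Fintype.card ι / τ))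
  rw [htr]
  push_cast
  field_simp
  ring

/-- Orthogonality of the characters of the cyclic group of order `s`. -/
lemma sum_exp_mul_sub_div {s : ℕ} (k l : Fin s) :
    ∑ r : Fin s, Complex.exp (2 * (Real.pi : ℂ) * Complex.I * ((k : ℂ) - (l : ℂ)) / s) ^ (r : ℕ)
      = if k = l then (s : ℂ) else 0 := by
  have hs : s ≠ 0 := fun h => (h ▸ k).elim0
  split_ifs with hkl
  · simp [hkl]
  set z := Complex.exp (2 * (Real.pi : ℂ) * Complex.I * ((k : ℂ) - (l : ℂ)) / s) with hz
  have hζ := Complex.isPrimitiveRoot_exp s hs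
  have hmul : z * Complex.exp (2 * (Real.pi : ℂ) * Complex.I / s) ^ (l : ℕ)
      = Complex.exp (2 * (Real.pi : ℂ) * Complex.I / s) ^ (k : ℕ) := by
    rw [hz, ← Complex.exp_nat_mul, ← Complex.exp_nat_mul, ← Complex.exp_add]
    congr 1
    ring
  have hz1 : z ≠ 1 := by
    intro h
    rw [h, one_mul] at hmul
    exact hkl (Fin.ext (hζ.pow_inj l.2 k.2 hmul).symm)
  have hzs : z ^ s = 1 := by
    have h := congrArg (· ^ s) hmul
    simpa only [mul_pow, ← pow_mul, mul_comm _ s, pow_mul _ s, hζ.pow_eq_one, one_pow,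
      mul_one] using h
  rw [Fin.sum_univ_eq_sum_range (fun r => z ^ r), geom_sum_eq hz1, hzs, sub_self, zero_div]

/-- paper's Corollary 4: for a sampled low-pass c.w.s.s. source
(`F_Ω` the first `s` columns of the `n`-point DFT, `n = Δ·s`, static channel),
the allocation `a*` that is uniform over the equidistant samples
(`a*_{Δr+t_d} = E_tot/(s σ_x²)`, zero otherwise) achieves
`err(a*) = P_x/(1 + γ E_tot/s)`, is optimal among all allocations with total
energy `E_tot`, and in particular is optimal for the full energy-harvesting
problem whenever it satisfies the energy causality constraints. -/
theorem stmt15 (Δ s : ℕ) (hΔ : 0 < Δ) (hs : 0 < s) (td : ℕ) (htd : td < Δ)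
    (n : ℕ) (hn : n = Δ * s)
    (Px γ Etot : ℝ) (hPx : 0 < Px) (hγ : 0 < γ) (hEtot : 0 ≤ Etot)
    (σx2 : ℝ) (hσ : σx2 = Px / n)
    (FΩ : Matrix (Fin n) (Fin s) ℂ)
    (hFΩ : ∀ (t : Fin n) (k : Fin s),
      FΩ t k = ((1 / Real.sqrt n : ℝ) : ℂ) *
        Complex.exp (-(2 * (Real.pi : ℂ) * Complex.I * (t.1 : ℂ) * (k.1 : ℂ)) / (n : ℂ)))
    (idx : Fin s → Fin n) (hidx : ∀ r, (idx r : ℕ) = Δ * r.1 + td)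
    (astar : Fin n → ℝ)
    (hastar1 : ∀ r, astar (idx r) = Etot / (s * σx2))
    (hastar2 : ∀ t : Fin n, (∀ r, t ≠ idx r) → astar t = 0) :
    Matrix.trace
        ((((s : ℝ) / Px : ℝ) • (1 : Matrix (Fin s) (Fin s) ℂ)
            + (γ : ℂ) • (FΩᴴ * Matrix.diagonal (fun t => (astar t : ℂ)) * FΩ))⁻¹)
      = ((Px / (1 + γ * Etot / s) : ℝ) : ℂ)
    ∧ (∀ a : Fin n → ℝ, (∀ t, 0 ≤ a t) → (∑ t, a t * σx2 = Etot) →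
        Matrix.trace
            ((((s : ℝ) / Px : ℝ) • (1 : Matrix (Fin s) (Fin s) ℂ)
                + (γ : ℂ) • (FΩᴴ * Matrix.diagonal (fun t => (astar t : ℂ)) * FΩ))⁻¹)
          ≤ Matrix.trace
              ((((s : ℝ) / Px : ℝ) • (1 : Matrix (Fin s) (Fin s) ℂ)
                  + (γ : ℂ) • (FΩᴴ * Matrix.diagonal (fun t => (a t : ℂ)) * FΩ))⁻¹))
    ∧ (∀ E : Fin n → ℝ, (∀ t, 0 ≤ E t) → (∑ t, E t = Etot) →
        (∀ t : Fin n, ∑ l ∈ Finset.Iic t, astar l * σx2 ≤ ∑ l ∈ Finset.Iic t, E l) →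
        ∀ a : Fin n → ℝ, (∀ t, 0 ≤ a t) →
          (∀ t : Fin n, ∑ l ∈ Finset.Iic t, a l * σx2 ≤ ∑ l ∈ Finset.Iic t, E l) →
          (∑ t, a t * σx2 = Etot) →
          Matrix.trace
              ((((s : ℝ) / Px : ℝ) • (1 : Matrix (Fin s) (Fin s) ℂ)
                  + (γ : ℂ) • (FΩᴴ * Matrix.diagonal (fun t => (astar t : ℂ)) * FΩ))⁻¹)
            ≤ Matrix.trace
                ((((s : ℝ) / Px : ℝ) • (1 : Matrix (Fin s) (Fin s) ℂ)
                    + (γ : ℂ) • (FΩᴴ * Matrix.diagonal (fun t => (a t : ℂ)) * FΩ))⁻¹)) := by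
  have hn0 : 0 < n := hn ▸ Nat.mul_pos hΔ hs
  have hsR : (0 : ℝ) < s := by exact_mod_cast hs
  have hnR : (0 : ℝ) < n := by exact_mod_cast hn0
  have hsC : (s : ℂ) ≠ 0 := by exact_mod_cast hs.ne'
  have hΔC : (Δ : ℂ) ≠ 0 := by exact_mod_cast hΔ.ne'
  have hnC : (n : ℂ) ≠ 0 := by exact_mod_cast hn0.ne'
  have hPC : (Px : ℂ) ≠ 0 := by exact_mod_cast hPx.ne'
  have hnmul : (n : ℂ) = Δ * s := by rw [hn]; push_cast; rfl
  have hF : ∀ t k l, star (FΩ t k) * FΩ t l = (1 / n : ℂ) *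
      Complex.exp (2 * (Real.pi : ℂ) * Complex.I * (t.1 : ℂ) * ((k.1 : ℂ) - (l.1 : ℂ)) / n) := by
    intro t k l
    have hsq : ((1 / Real.sqrt n : ℝ) : ℂ) * ((1 / Real.sqrt n : ℝ) : ℂ) = 1 / n := by
      rw [← Complex.ofReal_mul, div_mul_div_comm, Real.mul_self_sqrt hnR.le]
      push_cast
      ring
    rw [hFΩ, hFΩ, star_mul', ← hsq]
    simp only [Complex.star_def, Complex.conj_ofReal, ← Complex.exp_conj]
    rw [mul_mul_mul_comm, ← Complex.exp_add]
    congr 2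
    simp only [map_div₀, map_neg, map_mul, Complex.conj_ofReal, Complex.conj_I,
      Complex.conj_natCast, map_ofNat]
    ring
  have hG : ∀ (a : Fin n → ℝ) k l,
      (FΩᴴ * Matrix.diagonal (fun t => (a t : ℂ)) * FΩ) k l
        = ∑ t, (a t : ℂ) * (star (FΩ t k) * FΩ t l) := by
    intro a k l
    rw [Matrix.mul_apply]
    refine Finset.sum_congr rfl fun t _ => ?_
    rw [Matrix.mul_diagonal, Matrix.conjTranspose_apply]
    ring
  have hidx_inj : Function.Injective idx := by
    intro r r' h
    have h' : Δ * r.1 + td = Δ * r'.1 + td := by rw [← hidx, ← hidx, h]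
    exact Fin.ext (Nat.eq_of_mul_eq_mul_left hΔ (Nat.add_right_cancel h'))
  have hGstar : FΩᴴ * Matrix.diagonal (fun t => (astar t : ℂ)) * FΩ
      = ((Etot / Px : ℝ) : ℂ) • (1 : Matrix (Fin s) (Fin s) ℂ) := by
    ext k l
    rw [hG, ← Fintype.sum_of_injective idx hidx_inj
      (fun r => ((Etot / (s * σx2) : ℝ) : ℂ) * ((1 / n : ℂ) *
        (Complex.exp (2 * (Real.pi : ℂ) * Complex.I * (td : ℂ) * ((k.1 : ℂ) - (l.1 : ℂ)) / n) *
        Complex.exp (2 * (Real.pi : ℂ) * Complex.I * ((k.1 : ℂ) - (l.1 : ℂ)) / s) ^ r.1)))]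
    · rw [← Finset.mul_sum, ← Finset.mul_sum, ← Finset.mul_sum, sum_exp_mul_sub_div,
        Matrix.smul_apply, Matrix.one_apply, hσ]
      split_ifs with hkl
      · subst hkl
        simp only [sub_self, mul_zero, zero_div, Complex.exp_zero, one_mul, smul_eq_mul, mul_one]
        push_cast
        field_simp
      · simp
    · intro t ht
      rw [hastar2 t fun r h => ht ⟨r, h.symm⟩]
      simp
    · intro r
      rw [hastar1, hF, ← Complex.exp_nat_mul, ← Complex.exp_add, hidx, hnmul]
      congr 3
      push_cast
      field_simp
      ring
  have hstar : Matrix.trace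
      ((((s : ℝ) / Px : ℝ) • (1 : Matrix (Fin s) (Fin s) ℂ)
          + (γ : ℂ) • (FΩᴴ * Matrix.diagonal (fun t => (astar t : ℂ)) * FΩ))⁻¹)
      = ((Px / (1 + γ * Etot / s) : ℝ) : ℂ) := by
    have hscal : ((s : ℝ) / Px : ℝ) • (1 : Matrix (Fin s) (Fin s) ℂ)
        + (γ : ℂ) • (FΩᴴ * Matrix.diagonal (fun t => (astar t : ℂ)) * FΩ)
        = (((s + γ * Etot) / Px : ℝ) : ℂ) • (1 : Matrix (Fin s) (Fin s) ℂ) := by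
      rw [hGstar, ← Complex.coe_smul, smul_smul, ← add_smul]
      congr 1
      push_cast
      ring
    have hne : (s + γ * Etot) ≠ 0 := by positivity
    have hinv : ((((s + γ * Etot) / Px : ℝ) : ℂ) • (1 : Matrix (Fin s) (Fin s) ℂ))⁻¹
        = ((Px / (s + γ * Etot) : ℝ) : ℂ) • (1 : Matrix (Fin s) (Fin s) ℂ) := by
      refine Matrix.inv_eq_right_inv ?_
      rw [smul_mul_smul_comm, one_mul, ← Complex.ofReal_mul, div_mul_div_cancel₀ hPx.ne',
        div_self hne, Complex.ofReal_one, one_smul]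
    rw [hscal, hinv, Matrix.trace_smul, Matrix.trace_one, Fintype.card_fin, smul_eq_mul,
      ← Complex.ofReal_natCast, ← Complex.ofReal_mul]
    congr 1
    field_simp
  have hopt : ∀ a : Fin n → ℝ, (∀ t, 0 ≤ a t) → (∑ t, a t * σx2 = Etot) →
      ((Px / (1 + γ * Etot / s) : ℝ) : ℂ) ≤ Matrix.trace
          ((((s : ℝ) / Px : ℝ) • (1 : Matrix (Fin s) (Fin s) ℂ)
              + (γ : ℂ) • (FΩᴴ * Matrix.diagonal (fun t => (a t : ℂ)) * FΩ))⁻¹) := by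
    intro a ha hsum
    have hsumC : ∑ t, (a t : ℂ) = Etot * n / Px := by
      rw [← hsum, hσ, ← Finset.sum_mul]
      push_cast
      field_simp
    have hpd : (((s : ℝ) / Px : ℝ) • (1 : Matrix (Fin s) (Fin s) ℂ)
        + (γ : ℂ) • (FΩᴴ * Matrix.diagonal (fun t => (a t : ℂ)) * FΩ)).PosDef := by
      refine (Matrix.PosDef.one.smul (div_pos hsR hPx)).add_posSemidef ?_
      refine Matrix.PosSemidef.smul ?_ (by exact_mod_cast hγ.le)
      refine Matrix.PosSemidef.conjTranspose_mul_mul_same ?_ FΩ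
      exact Matrix.PosSemidef.diagonal fun t => by simpa using ha t
    have htr : (((s : ℝ) / Px : ℝ) • (1 : Matrix (Fin s) (Fin s) ℂ)
        + (γ : ℂ) • (FΩᴴ * Matrix.diagonal (fun t => (a t : ℂ)) * FΩ)).trace
        = ((s * (s + γ * Etot) / Px : ℝ) : ℂ) := by
      have hdiag : (FΩᴴ * Matrix.diagonal (fun t => (a t : ℂ)) * FΩ).trace
          = s * (Etot / Px) := by
        simp only [Matrix.trace, Matrix.diag_apply, hG, hF, sub_self, mul_zero, zero_div,
          Complex.exp_zero, mul_one, ← Finset.sum_mul, hsumC, Finset.sum_const,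
          Finset.card_univ, Fintype.card_fin, nsmul_eq_mul]
        field_simp
      rw [Matrix.trace_add, Matrix.trace_smul, Matrix.trace_smul, hdiag, Matrix.trace_one,
        Fintype.card_fin, Complex.real_smul, smul_eq_mul]
      push_cast
      field_simp
    have hτ : s * (s + γ * Etot) / Px ≠ 0 := by positivity
    refine le_of_eq_of_le ?_ (hpd.card_sq_div_le_trace_inv hτ htr)
    rw [Fintype.card_fin]
    congr 1
    field_simp
  rw [hstar]
  exact ⟨rfl, hopt, fun _ _ _ _ a ha _ hsum => hopt a ha hsum⟩
end

section
/- Let n, s be positive integers with s ≤ n, U ∈ ℂ^{n×s} with U†U = I_s, P_x > 0, γ > 0, K = (P_x/s) U U†, and let d ∈ ℝ^n with d_t ≥ 0 (d_t = |h_t|² a_t). Then (P_x/s)·tr[(I_s + γ (P_x/s) U† diag(d_1,…,d_n) U)⁻¹] ≥ (P_x/s)·( Σ_{t=1}^n 1/(1 + γ d_t [K]_{tt}) + s − n ). -/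
open Matrix
open scoped ComplexOrder

/-- Sylvester-type identity `tr (1 + AB)⁻¹ - m = tr (1 + BA)⁻¹ - n`, in additive form. -/
theorem Matrix.trace_inv_one_add_mul_comm {m n R : Type*} [Fintype m] [Fintype n]
    [DecidableEq m] [DecidableEq n] [CommRing R] (A : Matrix m n R) (B : Matrix n m R)
    (h : IsUnit (1 + B * A)) :
    trace (1 + A * B : Matrix m m R)⁻¹ + Fintype.card n =
      trace (1 + B * A : Matrix n n R)⁻¹ + Fintype.card m := by
  have hdet := (Matrix.isUnit_iff_isUnit_det _).mp h
  have hinv : (1 + A * B)⁻¹ = 1 - A * (1 + B * A)⁻¹ * B := by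
    apply Matrix.inv_eq_right_inv
    calc (1 + A * B) * (1 - A * (1 + B * A)⁻¹ * B)
        = 1 + A * B - A * ((1 + B * A) * (1 + B * A)⁻¹) * B := by
          rw [Matrix.mul_sub, Matrix.mul_one, ← Matrix.mul_assoc, ← Matrix.mul_assoc,
            ← Matrix.mul_assoc, Matrix.add_mul, Matrix.mul_add, Matrix.one_mul, Matrix.mul_one,
            Matrix.mul_assoc A B A]
      _ = 1 := by rw [Matrix.mul_nonsing_inv _ hdet]; simp
  have hcycle : trace (A * (1 + B * A : Matrix n n R)⁻¹ * B) =
      Fintype.card n - trace (1 + B * A : Matrix n n R)⁻¹ := by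
    calc trace (A * (1 + B * A : Matrix n n R)⁻¹ * B)
        = trace ((1 + B * A : Matrix n n R) * (1 + B * A)⁻¹ - (1 + B * A)⁻¹) := by
          rw [Matrix.trace_mul_comm, ← Matrix.mul_assoc, Matrix.add_mul, Matrix.one_mul,
            add_sub_cancel_left]
      _ = Fintype.card n - trace (1 + B * A : Matrix n n R)⁻¹ := by
          rw [Matrix.mul_nonsing_inv _ hdet, trace_sub, trace_one]
  rw [hinv, trace_sub, trace_one, hcycle]
  ring

theorem Matrix.PosDef.inv_diag_le_diag_inv {n 𝕜 : Type*} [Fintype n] [DecidableEq n] [RCLike 𝕜]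
    {R : Matrix n n 𝕜} (hR : R.PosDef) (i : n) : (R i i)⁻¹ ≤ R⁻¹ i i := by
  have hpos : 0 < R i i := hR.diag_pos
  have hdet := (Matrix.isUnit_iff_isUnit_det _).mp hR.isUnit
  set a : 𝕜 := (R i i)⁻¹ with ha
  have hstar : star a = a := by
    rw [ha, star_inv₀, hR.isHermitian.apply i i]
  have hH : (1 - a • R)ᴴ = 1 - a • R := by
    rw [conjTranspose_sub, conjTranspose_smul, conjTranspose_one, hR.isHermitian.eq, hstar]
  have hexpand : (1 - a • R) * R⁻¹ * (1 - a • R)ᴴ = R⁻¹ - (2 * a) • 1 + (a * a) • R := by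
    rw [hH]
    simp only [Matrix.sub_mul, Matrix.mul_sub, Matrix.smul_mul, Matrix.mul_smul, Matrix.one_mul,
      Matrix.mul_one, Matrix.mul_nonsing_inv _ hdet, Matrix.nonsing_inv_mul _ hdet]
    module
  have hdiag := (hR.inv.posSemidef.mul_mul_conjTranspose_same (1 - a • R)).diag_nonneg (i := i)
  rw [hexpand] at hdiag
  have haR : a * R i i = 1 := inv_mul_cancel₀ hpos.ne'
  have heq : (R⁻¹ - (2 * a) • 1 + (a * a) • R) i i = R⁻¹ i i - a := by
    simp only [add_apply, sub_apply, smul_apply, one_apply_eq, smul_eq_mul, mul_one, mul_assoc, haR]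
    ring
  rwa [heq, sub_nonneg] at hdiag

/-- paper's Lemma 9: for the flat-spectrum low-rank source
`K = (P_x/s) U U†` with `U†U = I_s`, effective gains `d_t = |h_t|² a_t ≥ 0`
and inverse noise variance `γ`, the MMSE
`(P_x/s) tr[(I_s + γ (P_x/s) U† diag(d) U)⁻¹]` is lower bounded by
`(P_x/s)(Σ_t 1/(1 + γ d_t [K]_{tt}) + s − n)`. -/
theorem stmt17 (n s : ℕ) (hn : 0 < n) (hs : 0 < s) (hsn : s ≤ n)
    (U : Matrix (Fin n) (Fin s) ℂ) (hU : Uᴴ * U = 1)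
    (Px γ : ℝ) (hPx : 0 < Px) (hγ : 0 < γ)
    (d : Fin n → ℝ) (hd : ∀ t, 0 ≤ d t)
    (Ktt : Fin n → ℝ) (hKtt : ∀ t, Ktt t = (Px / s) * ∑ k, ‖U t k‖ ^ 2) :
    (((Px / s) * ((∑ t, 1 / (1 + γ * d t * Ktt t)) + s - n) : ℝ) : ℂ)
      ≤ ((Px / s : ℝ) : ℂ) *
        Matrix.trace
          (((1 : Matrix (Fin s) (Fin s) ℂ)
              + ((γ * (Px / s) : ℝ) : ℂ) •
                (Uᴴ * Matrix.diagonal (fun t => (d t : ℂ)) * U))⁻¹) := by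
  have hc : 0 ≤ Px / s := by positivity
  have hw (t : Fin n) : 0 ≤ γ * (Px / s) * d t := mul_nonneg (by positivity) (hd t)
  let w : Fin n → ℂ := fun t => (√(γ * (Px / s) * d t) : ℝ)
  have hww (t : Fin n) : w t * w t = ((γ * (Px / s) : ℝ) : ℂ) * (d t : ℂ) := by
    simp only [w, ← Complex.ofReal_mul, Real.mul_self_sqrt (hw t)]
  have hwstar : star w = w := by
    ext t
    simp [w]
  set V : Matrix (Fin n) (Fin s) ℂ := diagonal w * U with hV
  have hgram : ((γ * (Px / s) : ℝ) : ℂ) • (Uᴴ * diagonal (fun t => (d t : ℂ)) * U) = Vᴴ * V := by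
    have hdw : diagonal w * diagonal w
        = ((γ * (Px / s) : ℝ) : ℂ) • diagonal (fun t => (d t : ℂ)) := by
      rw [diagonal_mul_diagonal, ← diagonal_smul]
      exact congrArg diagonal (funext hww)
    rw [hV, conjTranspose_mul, diagonal_conjTranspose, hwstar, ← Matrix.mul_assoc,
      Matrix.mul_assoc Uᴴ (diagonal w), hdw, Matrix.mul_smul, Matrix.smul_mul]
  have hM : (1 + Vᴴ * V).PosDef := PosDef.one.add_posSemidef (posSemidef_conjTranspose_mul_self V)
  have hR : (1 + V * Vᴴ).PosDef := PosDef.one.add_posSemidef (posSemidef_self_mul_conjTranspose V)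
  have hdiag (t : Fin n) : (1 + V * Vᴴ : Matrix (Fin n) (Fin n) ℂ) t t = ((1 + γ * d t * Ktt t : ℝ) : ℂ) := by
    have hVV : (V * Vᴴ) t t = w t * w t * ∑ k, ((‖U t k‖ ^ 2 : ℝ) : ℂ) := by
      rw [Matrix.mul_apply, Finset.mul_sum]
      refine Finset.sum_congr rfl fun k _ => ?_
      have hst : star (w t) = w t := congrFun hwstar t
      rw [conjTranspose_apply, hV, diagonal_mul, star_mul', hst, mul_mul_mul_comm]
      congr 1
      rw [Complex.ofReal_pow]
      exact Complex.mul_conj' (U t k)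
    rw [Matrix.add_apply, one_apply_eq, hVV, hww, hKtt]
    push_cast
    ring
  have htrace := Matrix.trace_inv_one_add_mul_comm V Vᴴ hM.isUnit
  rw [Fintype.card_fin, Fintype.card_fin] at htrace
  have hsum : ((∑ t, 1 / (1 + γ * d t * Ktt t) : ℝ) : ℂ) ≤
      trace (1 + V * Vᴴ : Matrix (Fin n) (Fin n) ℂ)⁻¹ := by
    rw [Complex.ofReal_sum]
    refine Finset.sum_le_sum fun t _ => ?_
    rw [one_div, Complex.ofReal_inv, ← hdiag]
    exact hR.inv_diag_le_diag_inv t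
  rw [hgram, Complex.ofReal_mul]
  refine mul_le_mul_of_nonneg_left ?_ (Complex.zero_le_real.mpr hc)
  rw [Complex.ofReal_sub, Complex.ofReal_add, Complex.ofReal_natCast, Complex.ofReal_natCast,
    sub_le_iff_le_add, ← htrace]
  gcongr
end

section
/- Let K ∈ ℂ^{n×n} be Hermitian positive definite and let d ∈ ℝ^n with d_t ≥ 0. Then tr[(K⁻¹ + diag(d_1,…,d_n))⁻¹] ≤ Σ_{t=1}^n [K]_{tt} / (1 + d_t [K]_{tt}), where [K]_{tt} are the (real, positive) diagonal entries of K. That is, the MMSE of the optimal estimator is upper bounded by the error of the scheme that ignores the correlation between the signal components. -/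
open Matrix
open scoped ComplexOrder

section LinearEstimation

variable {ι : Type*} [Fintype ι] [DecidableEq ι]

/-- The error covariance of the linear estimator with Hermitian gain `W` exceeds the optimal one
`P = (K⁻¹ + D)⁻¹` by the term `(W - P) (D K D + D) (W - P)`. -/
theorem linear_error_covariance_eq {K D P : Matrix ι ι ℂ} (W : Matrix ι ι ℂ)
    (hPK : P * (1 + D * K) = K) (hKP : (1 + K * D) * P = K) :
    (1 - W * D) * K * (1 - D * W) + W * D * W =
      P + (W - P) * (D * K * D + D) * (W - P) := by
  have left : P * (D * K * D + D) = K * D := by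
    have h := congrArg (· * D) hPK
    exact Eq.trans (by noncomm_ring) h
  have right : (D * K * D + D) * P = D * K := by
    have h := congrArg (D * ·) hKP
    exact Eq.trans (by noncomm_ring) h
  have both : P * (D * K * D + D) * P = K - P := by
    rw [left, eq_sub_iff_add_eq]
    conv_rhs => rw [← hKP]
    noncomm_ring
  have expand : (W - P) * (D * K * D + D) * (W - P) =
      W * (D * K * D + D) * W - W * ((D * K * D + D) * P)
        - P * (D * K * D + D) * W + P * (D * K * D + D) * P := by
    noncomm_ring
  rw [expand, both, right, left]
  noncomm_ring

/-- The trace of `(K⁻¹ + D)⁻¹` is at most the trace of the error covariance of any linear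
estimator with Hermitian gain `W`. -/
theorem trace_inv_add_inv_le {K D W : Matrix ι ι ℂ} (hK : K.PosDef) (hD : D.PosSemidef)
    (hW : W.IsHermitian) :
    trace ((K⁻¹ + D)⁻¹) ≤ trace ((1 - W * D) * K * (1 - D * W) + W * D * W) := by
  have hA : (K⁻¹ + D).PosDef := hK.inv.add_posSemidef hD
  have uK := (Matrix.isUnit_iff_isUnit_det K).mp hK.isUnit
  have uA := (Matrix.isUnit_iff_isUnit_det (K⁻¹ + D)).mp hA.isUnit
  have hPK : (K⁻¹ + D)⁻¹ * (1 + D * K) = K := by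
    rw [← nonsing_inv_mul K uK, ← add_mul, ← mul_assoc, nonsing_inv_mul _ uA, one_mul]
  have hKP : (1 + K * D) * (K⁻¹ + D)⁻¹ = K := by
    rw [← mul_nonsing_inv K uK, ← mul_add, mul_assoc, mul_nonsing_inv _ uA, mul_one]
  rw [linear_error_covariance_eq W hPK hKP, trace_add]
  have hS : (D * K * D + D).PosSemidef := by
    have h := hK.posSemidef.mul_mul_conjTranspose_same D
    rw [hD.isHermitian.eq] at h
    exact h.add hD
  have hT := hS.mul_mul_conjTranspose_same (W - (K⁻¹ + D)⁻¹)
  rw [(hW.sub hA.inv.isHermitian).eq] at hT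
  exact le_add_of_nonneg_right hT.trace_nonneg

end LinearEstimation

/-- for a Hermitian positive definite covariance `K` and
nonnegative effective gains `d`, the MMSE `tr[(K⁻¹ + diag(d))⁻¹]` is upper
bounded by `Σ_t [K]_{tt}/(1 + d_t [K]_{tt})`, the error of the scheme that
ignores the correlation between the signal components. -/
theorem stmt19 (n : ℕ) (hn : 0 < n)
    (K : Matrix (Fin n) (Fin n) ℂ) (hK : K.PosDef)
    (d : Fin n → ℝ) (hd : ∀ t, 0 ≤ d t) :
    Matrix.trace ((K⁻¹ + Matrix.diagonal (fun t => (d t : ℂ)))⁻¹)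
      ≤ ((∑ t, (K t t).re / (1 + d t * (K t t).re) : ℝ) : ℂ) := by
  have hD : (diagonal fun t => (d t : ℂ)).PosSemidef :=
    PosSemidef.diagonal fun t => by simpa using hd t
  let w : Fin n → ℝ := fun t => (K t t).re / (1 + d t * (K t t).re)
  have hW : (diagonal fun t => (w t : ℂ)).IsHermitian :=
    isHermitian_diagonal_of_self_adjoint _ (by ext t; simp)
  refine (trace_inv_add_inv_le hK hD hW).trans_eq ?_
  rw [trace, Complex.ofReal_sum]
  refine Finset.sum_congr rfl fun t _ => ?_
  have hpos : 0 < K t t := hK.diag_pos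
  have hre : 0 < (K t t).re := (Complex.pos_iff.mp hpos).1
  have hKt : K t t = ((K t t).re : ℂ) := Complex.ext rfl (Complex.pos_iff.mp hpos).2.symm
  have hden : 1 + d t * (K t t).re ≠ 0 :=
    (add_pos_of_pos_of_nonneg one_pos (mul_nonneg (hd t) hre.le)).ne'
  have hscalar : (1 - w t * d t) * (K t t).re * (1 - d t * w t) + w t * d t * w t = w t := by
    have hw : w t * (1 + d t * (K t t).re) = (K t t).re := div_mul_cancel₀ _ hden
    linear_combination -(1 - d t * w t) * hw
  simp only [← diagonal_one, diagonal_mul_diagonal, diagonal_sub, diag_apply, Matrix.add_apply,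
    mul_diagonal, diagonal_mul, diagonal_apply_eq]
  rw [hKt]
  exact_mod_cast hscalar
end
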